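/- Let E be a real inner product space, let ε ∈ (0, π), and let a be a real number with a·sin(ε/2) > 1 and a ≥ 1. If u₁, u₂, w₁, w₂ are unit vectors in E satisfying (u₁ + u₂) + a²·(w₁ + w₂) = 0, then sin((π − θ₃)/2) ≤ 1/a², and consequently π − θ₃ < ε, where θ₃ ∈ [0, π] is the angle between w₁ and w₂. -/

import Mathlib

/-- The sum of two unit vectors at angle `θ` has norm `2 cos (θ / 2)`. -/
theorem norm_add_eq_two_mul_cos_half_angle
    {E : Type*} [NormedAddCommGroup E] [InnerProductSpace ℝ E]
    {x y : E} (hx : ‖x‖ = 1) (hy : ‖y‖ = 1) :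
    ‖x + y‖ = 2 * Real.cos (InnerProductGeometry.angle x y / 2) := by
  have hcos : 0 ≤ Real.cos (InnerProductGeometry.angle x y / 2) :=
    Real.cos_nonneg_of_mem_Icc
      ⟨by linarith [InnerProductGeometry.angle_nonneg x y, Real.pi_pos],
        by linarith [InnerProductGeometry.angle_le_pi x y]⟩
  have hinner : Real.cos (InnerProductGeometry.angle x y) = inner ℝ x y := by
    simp [InnerProductGeometry.cos_angle, hx, hy]
  have hhalf := Real.cos_sq (InnerProductGeometry.angle x y / 2)
  rw [mul_div_cancel₀ _ two_ne_zero, hinner] at hhalf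
  rw [← sq_eq_sq₀ (norm_nonneg _) (by positivity), norm_add_sq_real, mul_pow, hhalf, hx, hy]
  ring

/-- Case 3 of the figure-eight example: if `a ≥ 1`, `a·sin(ε/2) > 1` and the unit
vectors satisfy `(u₁ + u₂) + a² • (w₁ + w₂) = 0`, then
`sin((π − θ₃)/2) ≤ 1/a²` and `π − θ₃ < ε`, where `θ₃` is the angle between
`w₁` and `w₂`. -/
theorem figure_eight_wide_angle_sq
    {E : Type*} [NormedAddCommGroup E] [InnerProductSpace ℝ E]
    (ε : ℝ) (hε0 : 0 < ε) (hεπ : ε < Real.pi)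
    (a : ℝ) (ha : 1 < a * Real.sin (ε / 2)) (ha1 : 1 ≤ a)
    (u₁ u₂ w₁ w₂ : E) (hu₁ : ‖u₁‖ = 1) (hu₂ : ‖u₂‖ = 1)
    (hw₁ : ‖w₁‖ = 1) (hw₂ : ‖w₂‖ = 1)
    (hstat : (u₁ + u₂) + a ^ 2 • (w₁ + w₂) = 0) :
    Real.sin ((Real.pi - InnerProductGeometry.angle w₁ w₂) / 2) ≤ 1 / a ^ 2 ∧
      Real.pi - InnerProductGeometry.angle w₁ w₂ < ε := by
  have ha0 : 0 < a := by linarith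
  have hnorm : a ^ 2 * ‖w₁ + w₂‖ ≤ 2 := by
    calc a ^ 2 * ‖w₁ + w₂‖ = ‖u₁ + u₂‖ := by
          rw [eq_neg_of_add_eq_zero_left hstat, norm_neg, norm_smul, norm_pow,
            Real.norm_of_nonneg ha0.le]
      _ ≤ 2 := by linarith [norm_add_le u₁ u₂]
  have hsin : Real.sin ((Real.pi - InnerProductGeometry.angle w₁ w₂) / 2) ≤ 1 / a ^ 2 := by
    rw [sub_div, Real.sin_pi_div_two_sub, le_div_iff₀ (by positivity)]
    rw [norm_add_eq_two_mul_cos_half_angle hw₁ hw₂] at hnorm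
    linarith
  refine ⟨hsin, ?_⟩
  have hlt : 1 / a ^ 2 < Real.sin (ε / 2) := by
    calc 1 / a ^ 2 ≤ 1 / a := one_div_le_one_div_of_le ha0 (le_self_pow₀ ha1 two_ne_zero)
      _ < Real.sin (ε / 2) := by rwa [div_lt_iff₀' ha0]
  by_contra! hle
  have hmono := Real.sin_le_sin_of_le_of_le_pi_div_two
    (by linarith : -(Real.pi / 2) ≤ ε / 2)
    (by linarith [InnerProductGeometry.angle_nonneg w₁ w₂] :
      (Real.pi - InnerProductGeometry.angle w₁ w₂) / 2 ≤ Real.pi / 2)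
    (by linarith)
  linarith
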